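/- For any Y ∈ ℂ^{N×L}, the atomic ℓ₀ norm ‖Y‖_{A,0} equals the optimal value of the rank minimization problem: minimize rank(U) over Hermitian positive semidefinite matrices U = [[W, Yᴴ],[Y, T(u)]] with W ∈ ℂ^{L×L}, u ∈ ℂ^N, where T(u) is the Hermitian Toeplitz matrix with first row uᵀ. -/

import Mathlib

/-!
The two minima agree because each feasible point on one side yields a feasible point on the other
side of no larger value.

From atoms to matrices (`exists_posSemidef_of_atoms`): if `Y = ∑ c_k a(f_k) φ_k` with `K` atoms,
the matrix `∑ c_k b_k b_kᴴ`, where `b_k` is `φ_kᴴ` stacked on `a(f_k)`, is positive semidefinite of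
rank at most `K`, has lower left block `Y`, and its lower right block `∑ c_k a(f_k) a(f_k)ᴴ` is
Toeplitz.

From matrices to atoms (`exists_atoms_of_posSemidef`): a feasible `U` of rank `r` is the Gram
matrix of vectors `w_l`, `v_j` in an `r`-dimensional space `E`. As `T(u)` is Toeplitz,
`v_j ↦ v_{j+1}` preserves inner products, so it extends to a linear isometry `S` of `E`, and
`v_j = S^j v_0`. The isometry is diagonalisable with eigenvalues on the unit circle; splitting
`v_0 = ∑ y_μ` into at most `r` eigenvectors gives
`Y_{jl} = ⟪v_j, w_l⟫ = ∑ conj(μ)^j ⟪y_μ, w_l⟫`, an expansion of `Y` in at most `r` atoms. This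
replaces the Carathéodory–Vandermonde decomposition of `T(u)`, and needs no case distinction on
whether `T(u)` is singular.

The value sets are nonempty, so that the infima in `ℕ` are attained: `W = Yᴴ Y`, `T(u) = 1` is
feasible for the rank problem, and by the above it also yields an atomic decomposition.
-/

open Complex Matrix Finset
open scoped ComplexOrder

/-- The atom `a(f) = (1, e^{i2πf}, …, e^{i2π(N-1)f})` as a vector in `ℂ^N`. -/
noncomputable def atom (N : ℕ) (f : ℝ) : Fin N → ℂ :=
  fun j => Complex.exp (2 * Real.pi * Complex.I * ((j : ℕ) : ℂ) * (f : ℂ))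

/-- Restriction of the atom to the index set `Ω`. -/
noncomputable def atomRes (N : ℕ) (Ω : Finset (Fin N)) (f : ℝ) : Ω → ℂ :=
  fun m => atom N f (m : Fin N)

/-- Spark of the continuous dictionary `A¹_Ω`: the smallest number of distinct atoms
`a_Ω(f)` with `f ∈ [0,1)` that are linearly dependent. -/
noncomputable def spark (N : ℕ) (Ω : Finset (Fin N)) : ℕ :=
  sInf {k | ∃ S : Finset ℝ, S.card = k ∧ (↑S : Set ℝ) ⊆ Set.Ico (0 : ℝ) 1 ∧
    ¬ LinearIndependent ℂ (fun f : S => atomRes N Ω (f : ℝ))}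

/-- The atomic `ℓ₀` norm of `Y ∈ ℂ^{N×L}`: the smallest number of atoms `a(f)φ`
(with `f ∈ [0,1)`, `‖φ‖₂ = 1` and positive coefficients) summing to `Y`. -/
noncomputable def AL0 (N L : ℕ) (Y : Matrix (Fin N) (Fin L) ℂ) : ℕ :=
  sInf {K | ∃ (c : Fin K → ℝ) (f : Fin K → ℝ) (φ : Fin K → Fin L → ℂ),
    (∀ k, 0 < c k) ∧ (∀ k, f k ∈ Set.Ico (0 : ℝ) 1) ∧
    (∀ k, ∑ l, Complex.normSq (φ k l) = 1) ∧
    (∀ j l, Y j l = ∑ k, (c k : ℂ) * atom N (f k) j * φ k l)}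

/-- The rows of `Y` indexed by `Ω`. -/
def rowsRes {N L : ℕ} (Ω : Finset (Fin N)) (Y : Matrix (Fin N) (Fin L) ℂ) :
    Matrix Ω (Fin L) ℂ := fun m l => Y (m : Fin N) l

/-- The Hermitian Toeplitz matrix `T(u)` with first row `uᵀ`. -/
noncomputable def Toep (N : ℕ) (u : Fin N → ℂ) : Matrix (Fin N) (Fin N) ℂ :=
  fun j k =>
    if _h : (j : ℕ) ≤ (k : ℕ) then
      u ⟨(k : ℕ) - (j : ℕ), Nat.lt_of_le_of_lt (Nat.sub_le _ _) k.isLt⟩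
    else
      (starRingEnd ℂ) (u ⟨(j : ℕ) - (k : ℕ), Nat.lt_of_le_of_lt (Nat.sub_le _ _) j.isLt⟩)

/-- The block matrix `U = [[W, Yᴴ],[Y, T(u)]]`. -/
noncomputable def blockU (N L : ℕ) (W : Matrix (Fin L) (Fin L) ℂ)
    (Y : Matrix (Fin N) (Fin L) ℂ) (u : Fin N → ℂ) :
    Matrix (Fin L ⊕ Fin N) (Fin L ⊕ Fin N) ℂ :=
  Matrix.fromBlocks W Yᴴ Y (Toep N u)

/-! ### Gram vectors and Toeplitz structure -/

/-- A positive semidefinite matrix is the Gram matrix of vectors in a space whose dimension is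
the rank of the matrix. -/
lemma exists_gram_of_posSemidef {n : Type*} [Fintype n] [DecidableEq n] {U : Matrix n n ℂ}
    (hU : U.PosSemidef) :
    ∃ (E : Submodule ℂ (EuclideanSpace ℂ n)) (v : n → E),
      Module.finrank ℂ E = U.rank ∧ ∀ i j, U i j = inner ℂ (v i) (v j) := by
  obtain ⟨B, hB⟩ : ∃ B : Matrix n n ℂ, U = Bᴴ * B := by
    open scoped MatrixOrder in
    exact CStarAlgebra.nonneg_iff_eq_star_mul_self.mp hU.nonneg
  let e := (WithLp.linearEquiv 2 ℂ (n → ℂ)).symm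
  refine ⟨(Submodule.span ℂ (Set.range B.col)).map e.toLinearMap,
    fun i => ⟨e (B.col i), Submodule.mem_map_of_mem (Submodule.subset_span ⟨i, rfl⟩)⟩, ?_, ?_⟩
  · rw [LinearEquiv.finrank_map_eq, ← Matrix.rank_eq_finrank_span_cols, hB,
      Matrix.rank_conjTranspose_mul_self]
  · intro i j
    rw [hB, Submodule.coe_inner, Matrix.mul_apply, PiLp.inner_apply]
    refine Finset.sum_congr rfl fun k _ => ?_
    simp [e, mul_comm]

/-- Two families of vectors with the same Gram matrix differ by a linear isometry of the ambient
finite-dimensional space. -/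
lemma exists_isometry_of_inner_eq {E : Type*} [NormedAddCommGroup E] [InnerProductSpace ℂ E]
    [FiniteDimensional ℂ E] {ι : Type*} [Fintype ι] [DecidableEq ι] (v w : ι → E)
    (h : ∀ i j, inner ℂ (v i) (v j) = inner ℂ (w i) (w j)) :
    ∃ S : E →ₗᵢ[ℂ] E, ∀ i, S (v i) = w i := by
  let P := Fintype.linearCombination ℂ v
  let Q := Fintype.linearCombination ℂ w
  have hPQ : ∀ c, ‖P c‖ = ‖Q c‖ := by
    intro c
    have : inner ℂ (P c) (P c) = inner ℂ (Q c) (Q c) := by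
      simp only [P, Q, Fintype.linearCombination_apply, sum_inner, inner_sum, inner_smul_left,
        inner_smul_right, h]
    rw [@norm_eq_sqrt_re_inner ℂ, @norm_eq_sqrt_re_inner ℂ E, this]
  -- `Q ∘ g`, for a section `g` of `P`, is the isometry on the range of `P` (the span of `v`).
  obtain ⟨g, hg⟩ := P.rangeRestrict.exists_rightInverse_of_surjective P.range_rangeRestrict
  have hg' : ∀ x : LinearMap.range P, P (g x) = x := fun x =>
    congrArg Subtype.val (LinearMap.congr_fun hg x)
  let S₀ : LinearMap.range P →ₗᵢ[ℂ] E :=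
    ⟨Q ∘ₗ g, fun x => by rw [LinearMap.comp_apply, ← hPQ, hg']; rfl⟩
  refine ⟨S₀.extend, fun i => ?_⟩
  have hPi : P (Pi.single i 1) = v i := by simp [P]
  have hQi : Q (Pi.single i 1) = w i := by simp [Q]
  let x : LinearMap.range P := ⟨v i, Pi.single i 1, hPi⟩
  have h1 : S₀.extend (v i) = S₀ x := LinearIsometry.extend_apply S₀ x
  rw [h1, ← hQi, ← sub_eq_zero, ← norm_eq_zero]
  change ‖Q (g x) - Q (Pi.single i 1)‖ = 0
  rw [← map_sub, ← hPQ, map_sub, hg', hPi, sub_self, norm_zero]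

/-- A finite sequence with Toeplitz Gram matrix is a piece of the orbit of a vector under a
linear isometry. -/
lemma exists_orbit_of_toeplitz {E : Type*} [NormedAddCommGroup E] [InnerProductSpace ℂ E]
    [FiniteDimensional ℂ E] {N : ℕ} (v : Fin N → E)
    (h : ∀ (i j : ℕ) (hi : i + 1 < N) (hj : j + 1 < N),
      inner ℂ (v ⟨i, by omega⟩) (v ⟨j, by omega⟩) = inner ℂ (v ⟨i + 1, hi⟩) (v ⟨j + 1, hj⟩)) :
    ∃ (S : E →ₗᵢ[ℂ] E) (x : E), ∀ j : Fin N, v j = (S.toLinearMap ^ (j : ℕ)) x := by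
  rcases N with _ | N
  · exact ⟨LinearIsometry.id, 0, fun j => j.elim0⟩
  obtain ⟨S, hS⟩ := exists_isometry_of_inner_eq (fun i : Fin N => v i.castSucc)
    (fun i : Fin N => v i.succ)
    (fun i j => h i j (Nat.succ_lt_succ i.isLt) (Nat.succ_lt_succ j.isLt))
  refine ⟨S, v 0, fun j => ?_⟩
  induction j using Fin.induction with
  | zero => simp
  | succ i ih =>
    rw [← hS i, ih, Fin.val_succ, pow_succ', Module.End.mul_apply]
    rfl

/-! ### Spectral expansion of orbits of isometries -/

/-- A linear isometry of a finite-dimensional space is semisimple: the orthogonal complement of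
an invariant subspace `p` is invariant, because the isometry maps `p` onto itself. -/
lemma LinearIsometry.isSemisimple_of_finiteDimensional {E : Type*} [NormedAddCommGroup E]
    [InnerProductSpace ℂ E] [FiniteDimensional ℂ E] (S : E →ₗᵢ[ℂ] E) :
    Module.End.IsSemisimple S.toLinearMap := by
  rw [Module.End.isSemisimple_iff]
  intro p hp
  refine ⟨pᗮ, ?_, p.isCompl_orthogonal⟩
  have hmap : p.map S.toLinearMap = p := by
    refine Submodule.eq_of_le_of_finrank_eq
      ((Module.End.mem_invtSubmodule_iff_map_le _).mp hp) ?_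
    exact (p.equivMapOfInjective S.toLinearMap S.injective).finrank_eq.symm
  rw [Module.End.mem_invtSubmodule_iff_forall_mem_of_mem]
  intro y hy
  rw [Submodule.mem_orthogonal] at hy ⊢
  intro u hu
  rw [← hmap] at hu
  obtain ⟨u, hu, rfl⟩ := hu
  exact (S.inner_map_map u y).trans (hy u hu)

/-- Spectral expansion of the orbit of a vector `x` under a linear isometry: with `x = ∑ y μ` split
into at most `dim E` eigenvectors, the orbit is the sum of the progressions `μ ^ j • y μ`, with
`|μ| = 1`. It is stated for the inner product with `w`, which is conjugate linear on the left. -/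
lemma exists_geometric_expansion {E : Type*} [NormedAddCommGroup E] [InnerProductSpace ℂ E]
    [FiniteDimensional ℂ E] (S : E →ₗᵢ[ℂ] E) (x : E) :
    ∃ (s : Finset ℂ) (y : ℂ → E), s.card ≤ Module.finrank ℂ E ∧ (∀ μ ∈ s, ‖μ‖ = 1) ∧
      ∀ (j : ℕ) (w : E), inner ℂ ((S.toLinearMap ^ j) x) w =
        ∑ μ ∈ s, (starRingEnd ℂ) μ ^ j * inner ℂ (y μ) w := by
  have hx : x ∈ ⨆ μ : ℂ, Module.End.eigenspace S.toLinearMap μ := by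
    rw [S.isSemisimple_of_finiteDimensional.iSup_eigenspace_eq_top]
    exact Submodule.mem_top
  obtain ⟨y, hy, rfl⟩ := (Submodule.mem_iSup_iff_exists_finsupp _ _).mp hx
  have hev : ∀ μ ∈ y.support, Module.End.HasEigenvector S.toLinearMap μ (y μ) := fun μ hμ =>
    ⟨hy μ, Finsupp.mem_support_iff.mp hμ⟩
  refine ⟨y.support, y, ?_, ?_, ?_⟩
  · have := Module.End.eigenvectors_linearIndependent' S.toLinearMap
      (fun μ : y.support => (μ : ℂ)) Subtype.val_injective (fun μ => y μ) (fun μ => hev μ μ.2)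
    simpa using this.fintype_card_le_finrank
  · intro μ hμ
    have h1 : S (y μ) = μ • y μ := (hev μ hμ).apply_eq_smul
    have h2 := S.norm_map (y μ)
    rw [h1, norm_smul] at h2
    exact (mul_eq_right₀ (norm_ne_zero_iff.mpr (Finsupp.mem_support_iff.mp hμ))).mp h2
  · intro j w
    rw [Finsupp.sum, map_sum, sum_inner]
    refine Finset.sum_congr rfl fun μ hμ => ?_
    rw [(hev μ hμ).pow_apply j, inner_smul_left, map_pow]

/-! ### From feasible matrices to atomic decompositions -/

/-- Every point of the unit circle generates an atom with frequency in `[0, 1)`. -/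
lemma exists_atom_eq_pow {z : ℂ} (hz : ‖z‖ = 1) (N : ℕ) :
    ∃ f ∈ Set.Ico (0 : ℝ) 1, ∀ j : Fin N, atom N f j = z ^ (j : ℕ) := by
  refine ⟨Int.fract (z.arg / (2 * Real.pi)), ⟨Int.fract_nonneg _, Int.fract_lt_one _⟩,
    fun j => ?_⟩
  have h1 : Complex.exp (2 * Real.pi * Complex.I *
      ((Int.fract (z.arg / (2 * Real.pi)) : ℝ) : ℂ)) = z := by
    have hz' : Complex.exp (z.arg * Complex.I) = z := by
      simpa [hz] using Complex.norm_mul_exp_arg_mul_I z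
    rw [Int.fract]
    push_cast
    rw [show 2 * (Real.pi : ℂ) * Complex.I * ((z.arg : ℂ) / (2 * Real.pi)
        - (⌊z.arg / (2 * Real.pi)⌋ : ℂ)) = z.arg * Complex.I
        - (⌊z.arg / (2 * Real.pi)⌋ : ℂ) * (2 * Real.pi * Complex.I) by field_simp,
      Complex.exp_sub, Complex.exp_int_mul_two_pi_mul_I, div_one, hz']
  rw [atom, ← h1, ← Complex.exp_nat_mul, h1]
  congr 1
  ring

/-- An expansion of `Y` in atoms with arbitrary, possibly zero, row coefficients: normalising the
rows and dropping the zero ones gives an expansion of the kind `AL0` counts. -/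
lemma exists_atoms_of_expansion {N L : ℕ} {Y : Matrix (Fin N) (Fin L) ℂ} (s : Finset ℂ)
    (hs : ∀ μ ∈ s, ‖μ‖ = 1) (ψ : ℂ → Fin L → ℂ)
    (hY : ∀ j l, Y j l = ∑ μ ∈ s, μ ^ (j : ℕ) * ψ μ l) :
    ∃ K ≤ s.card, ∃ (c : Fin K → ℝ) (f : Fin K → ℝ) (φ : Fin K → Fin L → ℂ),
      (∀ k, 0 < c k) ∧ (∀ k, f k ∈ Set.Ico (0 : ℝ) 1) ∧
      (∀ k, ∑ l, Complex.normSq (φ k l) = 1) ∧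
      (∀ j l, Y j l = ∑ k, (c k : ℂ) * atom N (f k) j * φ k l) := by
  classical
  let t := s.filter fun μ => ψ μ ≠ 0
  let e : Fin t.card ≃ t := t.equivFin.symm
  have ht : ∀ k, ‖(e k : ℂ)‖ = 1 := fun k => hs _ (Finset.mem_filter.mp (e k).2).1
  choose f hf hfa using fun k => exists_atom_eq_pow (ht k) N
  let c : Fin t.card → ℝ := fun k => √(∑ l, Complex.normSq (ψ (e k) l))
  have hpos : ∀ k, 0 < ∑ l, Complex.normSq (ψ (e k) l) := by
    intro k
    obtain ⟨l, hl⟩ := Function.ne_iff.mp (Finset.mem_filter.mp (e k).2).2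
    exact Finset.sum_pos' (fun _ _ => Complex.normSq_nonneg _)
      ⟨l, Finset.mem_univ _, Complex.normSq_pos.mpr hl⟩
  have hc : ∀ k, 0 < c k := fun k => Real.sqrt_pos.mpr (hpos k)
  have hcC : ∀ k, (c k : ℂ) ≠ 0 := fun k => by exact_mod_cast (hc k).ne'
  refine ⟨t.card, Finset.card_filter_le _ _, c, f, fun k l => ψ (e k) l / c k, hc, hf, ?_, ?_⟩
  · intro k
    simp only [Complex.normSq_div, ← Finset.sum_div, Complex.normSq_ofReal]
    rw [Real.mul_self_sqrt (hpos k).le, div_self (hpos k).ne']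
  · intro j l
    have h1 : Y j l = ∑ μ ∈ t, μ ^ (j : ℕ) * ψ μ l := by
      rw [hY, Finset.sum_filter_of_ne]
      intro μ _ h h0
      simp [h0] at h
    rw [h1, ← Finset.sum_coe_sort, ← e.sum_comp]
    refine Finset.sum_congr rfl fun k _ => ?_
    rw [hfa]
    field_simp [hcC k]

lemma Toep_succ_succ {N : ℕ} (u : Fin N → ℂ) (i j : ℕ) (hi : i + 1 < N) (hj : j + 1 < N) :
    Toep N u ⟨i, by omega⟩ ⟨j, by omega⟩ = Toep N u ⟨i + 1, hi⟩ ⟨j + 1, hj⟩ := by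
  simp [Toep]

/-- A feasible block matrix of rank `r` yields an atomic decomposition with at most `r` atoms. -/
lemma exists_atoms_of_posSemidef {N L : ℕ} {Y : Matrix (Fin N) (Fin L) ℂ}
    {W : Matrix (Fin L) (Fin L) ℂ} {u : Fin N → ℂ} (hU : (blockU N L W Y u).PosSemidef) :
    ∃ K ≤ (blockU N L W Y u).rank,
      ∃ (c : Fin K → ℝ) (f : Fin K → ℝ) (φ : Fin K → Fin L → ℂ),
      (∀ k, 0 < c k) ∧ (∀ k, f k ∈ Set.Ico (0 : ℝ) 1) ∧
      (∀ k, ∑ l, Complex.normSq (φ k l) = 1) ∧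
      (∀ j l, Y j l = ∑ k, (c k : ℂ) * atom N (f k) j * φ k l) := by
  classical
  obtain ⟨E, v, hE, hv⟩ := exists_gram_of_posSemidef hU
  obtain ⟨S, x, hx⟩ := exists_orbit_of_toeplitz (fun j : Fin N => v (Sum.inr j)) (by
    intro i j hi hj
    rw [← hv, ← hv]
    exact Toep_succ_succ u i j hi hj)
  obtain ⟨s, y, hs, hs1, hy⟩ := exists_geometric_expansion S x
  obtain ⟨K, hK, h⟩ := exists_atoms_of_expansion (Y := Y) (s.image (starRingEnd ℂ))
    (by
      intro μ hμ
      obtain ⟨ν, hν, rfl⟩ := Finset.mem_image.mp hμ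
      simpa using hs1 ν hν)
    (fun μ l => inner ℂ (y ((starRingEnd ℂ) μ)) (v (Sum.inl l)))
    (by
      intro j l
      have h1 : Y j l = inner ℂ (v (Sum.inr j)) (v (Sum.inl l)) := hv (Sum.inr j) (Sum.inl l)
      rw [h1, hx j, hy, Finset.sum_image (starRingEnd ℂ).injective.injOn]
      simp only [Complex.conj_conj])
  exact ⟨K, (hK.trans Finset.card_image_le).trans (hs.trans hE.le), h⟩

/-! ### From atomic decompositions to feasible matrices -/

/-- `exp (2πi f j)` times the conjugate of `exp (2πi f k)` depends on `j - k` only. -/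
lemma atom_mul_conj (N : ℕ) (f : ℝ) (j k : Fin N) :
    atom N f j * (starRingEnd ℂ) (atom N f k) =
      Complex.exp (2 * Real.pi * Complex.I * (((j : ℕ) : ℂ) - ((k : ℕ) : ℂ)) * f) := by
  rw [atom, atom, ← Complex.exp_conj, ← Complex.exp_add]
  congr 1
  simp only [map_mul, Complex.conj_ofReal, Complex.conj_I, map_natCast, map_ofNat]
  ring

/-- An atomic decomposition with `K` atoms yields a feasible block matrix of rank at most `K`. -/
lemma exists_posSemidef_of_atoms {N L K : ℕ} {Y : Matrix (Fin N) (Fin L) ℂ}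
    (c : Fin K → ℝ) (f : Fin K → ℝ) (φ : Fin K → Fin L → ℂ) (hc : ∀ k, 0 < c k)
    (hY : ∀ j l, Y j l = ∑ k, (c k : ℂ) * atom N (f k) j * φ k l) :
    ∃ (W : Matrix (Fin L) (Fin L) ℂ) (u : Fin N → ℂ),
      (blockU N L W Y u).PosSemidef ∧ (blockU N L W Y u).rank ≤ K := by
  -- The columns of `B` are the vectors `√c_k (φ_kᴴ, a(f_k))`, so that `U = B Bᴴ`.
  let B : Matrix (Fin L ⊕ Fin N) (Fin K) ℂ := fun i k =>
    (√(c k) : ℂ) * Sum.elim (fun l => (starRingEnd ℂ) (φ k l)) (atom N (f k)) i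
  have hcc : ∀ k, (√(c k) : ℂ) * (√(c k) : ℂ) = c k := fun k => by
    exact_mod_cast Real.mul_self_sqrt (hc k).le
  have hBB : ∀ i i', (B * Bᴴ) i i' = ∑ k, (c k : ℂ) *
      (Sum.elim (fun l => (starRingEnd ℂ) (φ k l)) (atom N (f k)) i *
        (starRingEnd ℂ) (Sum.elim (fun l => (starRingEnd ℂ) (φ k l)) (atom N (f k)) i')) := by
    intro i i'
    rw [Matrix.mul_apply]
    refine Finset.sum_congr rfl fun k _ => ?_
    rw [Matrix.conjTranspose_apply, ← hcc k]
    simp only [B, star_mul', RCLike.star_def, Complex.conj_ofReal]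
    ring
  let W : Matrix (Fin L) (Fin L) ℂ := fun l l' => (B * Bᴴ) (Sum.inl l) (Sum.inl l')
  let u : Fin N → ℂ := fun m =>
    ∑ k, (c k : ℂ) * Complex.exp (2 * Real.pi * Complex.I * (0 - ((m : ℕ) : ℂ)) * f k)
  have hU : blockU N L W Y u = B * Bᴴ := by
    ext i i'
    rcases i with l | j <;> rcases i' with l' | j'
    · rfl
    · rw [hBB]
      simp only [blockU, Matrix.fromBlocks_apply₁₂, Matrix.conjTranspose_apply, hY, star_sum,
        star_mul', RCLike.star_def, Complex.conj_ofReal, Sum.elim_inl, Sum.elim_inr]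
      exact Finset.sum_congr rfl fun k _ => by ring
    · rw [hBB]
      simp only [blockU, Matrix.fromBlocks_apply₂₁, hY, Sum.elim_inl, Sum.elim_inr,
        Complex.conj_conj]
      exact Finset.sum_congr rfl fun k _ => by ring
    · rw [hBB]
      simp only [blockU, Matrix.fromBlocks_apply₂₂, Sum.elim_inr, atom_mul_conj, Toep, u]
      split_ifs with hjk
      · refine Finset.sum_congr rfl fun k _ => ?_
        rw [Nat.cast_sub hjk]
        ring_nf
      · rw [map_sum]
        refine Finset.sum_congr rfl fun k _ => ?_
        rw [Nat.cast_sub (by omega), map_mul, Complex.conj_ofReal, ← Complex.exp_conj]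
        simp only [map_mul, map_sub, map_zero, Complex.conj_ofReal, Complex.conj_I, map_natCast,
          map_ofNat]
        ring_nf
  refine ⟨W, u, hU ▸ Matrix.posSemidef_self_mul_conjTranspose B, ?_⟩
  rw [hU]
  exact (Matrix.rank_mul_le_left _ _).trans (by simpa using Matrix.rank_le_card_width B)

/-- The rank minimization problem is feasible: take `T(u) = 1` and `W = Yᴴ Y`. -/
lemma exists_blockU_posSemidef (N L : ℕ) (Y : Matrix (Fin N) (Fin L) ℂ) :
    ∃ (W : Matrix (Fin L) (Fin L) ℂ) (u : Fin N → ℂ), (blockU N L W Y u).PosSemidef := by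
  let u : Fin N → ℂ := fun m => if (m : ℕ) = 0 then 1 else 0
  have hu : Toep N u = 1 := by
    ext j k
    by_cases h : j = k
    · subst h; simp [Toep, u]
    · have h' : (j : ℕ) ≠ k := fun hh => h (Fin.ext hh)
      rw [Matrix.one_apply_ne h]
      simp only [Toep, u]
      split_ifs <;> first | omega | simp
  refine ⟨Yᴴ * Y, u, ?_⟩
  have hU : blockU N L (Yᴴ * Y) Y u =
      (Matrix.fromCols Y (1 : Matrix (Fin N) (Fin N) ℂ))ᴴ * Matrix.fromCols Y 1 := by
    rw [blockU, hu, Matrix.conjTranspose_fromCols_eq_fromRows_conjTranspose,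
      Matrix.fromRows_mul_fromCols]
    simp
  rw [hU]
  exact Matrix.posSemidef_conjTranspose_mul_self _

/-- the atomic `ℓ₀` norm equals the optimal value of the rank
minimization over PSD block matrices `U = [[W, Yᴴ],[Y, T(u)]]`. -/
theorem AL0_eq_rank_min (N L : ℕ) (Y : Matrix (Fin N) (Fin L) ℂ) :
    AL0 N L Y = sInf {r | ∃ (W : Matrix (Fin L) (Fin L) ℂ) (u : Fin N → ℂ),
      (blockU N L W Y u).PosSemidef ∧ (blockU N L W Y u).rank = r} := by
  obtain ⟨W₀, u₀, h₀⟩ := exists_blockU_posSemidef N L Y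
  apply le_antisymm
  · refine le_csInf ⟨_, W₀, u₀, h₀, rfl⟩ ?_
    rintro r ⟨W, u, hU, rfl⟩
    obtain ⟨K, hK, h⟩ := exists_atoms_of_posSemidef hU
    exact (Nat.sInf_le h).trans hK
  · obtain ⟨K₀, -, hK₀⟩ := exists_atoms_of_posSemidef h₀
    refine le_csInf ⟨K₀, hK₀⟩ ?_
    rintro K ⟨c, f, φ, hc, -, -, hY⟩
    obtain ⟨W, u, hU, hr⟩ := exists_posSemidef_of_atoms c f φ hc hY
    exact le_trans (Nat.sInf_le ⟨W, u, hU, rfl⟩) hr
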